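/- Let ψ be a symplectic homeomorphism of E and let N ⊆ E be any closed subset. Then R_{ψ(N)} = ψ(R_N). (Invariance of the rigid locus under symplectic homeomorphisms.) -/

import Mathlib

/-!
The rigid locus is governed by displacement energy: for a closed set `N`, a point `p` is *not* in
`R_N` if and only if some neighbourhood `V` of `p` can be displaced from `N` by Hamiltonian
diffeomorphisms of arbitrarily small Hofer norm (`ZeroDisp`). The latter condition survives
`C⁰`-limits of symplectomorphisms, which gives the theorem.

* If `φ ∈ Σ̄_N` and `φ(p) ∉ N`, then `φ` moves a compact ball `B` about `p` off `N`. For `σ ∈ Σ_N`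
  Hofer-close to `φ` the map `σ⁻¹φ` has small norm and still moves `B` off `N`
  (`exists_zeroDisp_of_notMem`).
* If `φ` displaces `B` from `N` and `Ψ_m → ψ`, `Ψ_m⁻¹ → ψ⁻¹` locally uniformly, then for large `m`
  the conjugate `Ψ_m φ Ψ_m⁻¹`, which has the same energy as `φ`, displaces `ψ(B)` from `ψ(N)`
  (`ZeroDisp.image`).
* Let `V` be an open neighbourhood of `p` with zero displacement energy from `N`. Every Hamiltonian
  diffeomorphism `f` supported in `V` lies in `Σ̄_N`, since for `φ` displacing `V` from `N` the map
  `φ f φ⁻¹` fixes `N` pointwise and is within `2‖φ‖` of `f` (`ZeroDisp.mem_sigmaBar`). If `p` were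
  rigid, all points near `p` would thus lie in `N`, because explicit twists supported near `p` move
  `p` to any nearby point (`exists_local_move`). Then an open set `W ∋ p` has zero displacement
  energy from itself.

This last situation is impossible by nondegeneracy of the Hofer norm, but that deep theorem is not
needed: by the Eliashberg–Polterovich commutator trick, a nontrivial commutator of two twists
supported in `W` has Hofer norm zero (`ZeroDisp.cheap_commutator`), hence so do all its symplectic
conjugates. Affine symplectic maps act transitively on pairs of distinct points
(`exists_isSympl_map_pair`), so one of these conjugates moves `p` off `N`. Maps of Hofer norm zero
belong to `Σ̄_N`, contradicting the rigidity of `p` (`notMem_of_zeroDisp`).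

The elementary properties of the Hofer norm used here (behaviour under inverses, composition and
symplectic conjugation) are expressed through `Cheap`, the existence of a generating Hamiltonian of
length below a given bound.
-/

open scoped ENNReal Topology

noncomputable section

/-- The standard symplectic vector space `E = ℝⁿ × ℝⁿ`. -/
abbrev E (n : ℕ) := (Fin n → ℝ) × (Fin n → ℝ)

/-- The standard symplectic form `ω₀((x,y),(x',y')) = ⟨x,y'⟩ − ⟨y,x'⟩`. -/
def omega0 (n : ℕ) (z w : E n) : ℝ :=
  (∑ i, z.1 i * w.2 i) - ∑ i, z.2 i * w.1 i

/-- The Hamiltonian vector field `X_{H_t}(x,y) = (∂_y H(t,x,y), −∂_x H(t,x,y))`. -/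
def XH (n : ℕ) (H : ℝ × E n → ℝ) (t : ℝ) (z : E n) : E n :=
  ((fun i => fderiv ℝ (fun w => H (t, w)) z (0, Pi.single i 1)),
   (fun i => -fderiv ℝ (fun w => H (t, w)) z (Pi.single i 1, 0)))

/-- `Φ` is the Hamiltonian flow of `H`: `Φ 0 = id` and `(d/dt) Φ t z = X_{H_t} (Φ t z)`. -/
def IsHamFlow (n : ℕ) (H : ℝ × E n → ℝ) (Φ : ℝ → E n → E n) : Prop :=
  (∀ z, Φ 0 z = z) ∧ ∀ z t, HasDerivAt (fun s => Φ s z) (XH n H t (Φ t z)) t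

/-- `H : ℝ × E → ℝ` is smooth with support a compact subset of `[0,1] × W`. -/
def AdmissibleH (n : ℕ) (W : Set (E n)) (H : ℝ × E n → ℝ) : Prop :=
  ContDiff ℝ (⊤ : ℕ∞) H ∧ IsCompact (tsupport H) ∧
    tsupport H ⊆ Set.Icc (0 : ℝ) 1 ×ˢ W

/-- `Ham(W)`: time-one maps of Hamiltonian flows of admissible Hamiltonians. -/
def HamGrp (n : ℕ) (W : Set (E n)) : Set (E n → E n) :=
  {φ | ∃ H Φ, AdmissibleH n W H ∧ IsHamFlow n H Φ ∧ φ = Φ 1}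

/-- `‖H‖ = ∫₀¹ (sup H(t,·) − inf H(t,·)) dt`. -/
def HNorm (n : ℕ) (H : ℝ × E n → ℝ) : ℝ :=
  ∫ t in (0:ℝ)..(1:ℝ),
    (sSup (Set.range fun z => H (t, z)) - sInf (Set.range fun z => H (t, z)))

/-- The Hofer norm `‖φ‖_W` of `φ ∈ Ham(W)`. -/
def hoferNorm (n : ℕ) (W : Set (E n)) (φ : E n → E n) : ℝ :=
  sInf {c | ∃ H Φ, AdmissibleH n W H ∧ IsHamFlow n H Φ ∧ φ = Φ 1 ∧ c = HNorm n H}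

/-- The displacement energy `e_W(U,N)`, valued in `ℝ≥0∞` (so `inf ∅ = ⊤`).
`closure U ∩ W` is the closure of `U` in `W`. -/
def dispE (n : ℕ) (W U N : Set (E n)) : ℝ≥0∞ :=
  sInf {c | ∃ φ ∈ HamGrp n W, φ '' (closure U ∩ W) ∩ N = ∅ ∧
    c = ENNReal.ofReal (hoferNorm n W φ)}

/-- `p` is rigid with respect to `N` in `W`. -/
def RigidWrt (n : ℕ) (W N : Set (E n)) (p : E n) : Prop :=
  ∀ U : Set (E n), IsOpen U → p ∈ U → U ⊆ W → 0 < dispE n W U N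

/-- `N` is a subset of `W` which is closed as a subset of `W`. -/
def ClosedIn (n : ℕ) (W N : Set (E n)) : Prop :=
  N ⊆ W ∧ closure N ∩ W ⊆ N

/-- `N` is locally closed. -/
def LocallyClosedSet (n : ℕ) (N : Set (E n)) : Prop :=
  ∀ q ∈ N, ∃ V : Set (E n), IsOpen V ∧ q ∈ V ∧ ClosedIn n V (N ∩ V)

/-- `p` is locally rigid with respect to `N`. -/
def LocRigid (n : ℕ) (N : Set (E n)) (p : E n) : Prop :=
  ∃ W : Set (E n), IsOpen W ∧ p ∈ W ∧ ClosedIn n W (N ∩ W) ∧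
    RigidWrt n W (N ∩ W) p

/-- `ψ` is a symplectomorphism from the open set `W` onto its (open) image. -/
def IsSymplecto (n : ℕ) (W : Set (E n)) (ψ : E n → E n) : Prop :=
  IsOpen W ∧ IsOpen (ψ '' W) ∧ Set.InjOn ψ W ∧ ContDiffOn ℝ (⊤ : ℕ∞) ψ W ∧
  (∃ g : E n → E n, ContDiffOn ℝ (⊤ : ℕ∞) g (ψ '' W) ∧ ∀ z ∈ W, g (ψ z) = z) ∧
  ∀ z ∈ W, ∀ u v, omega0 n (fderiv ℝ ψ z u) (fderiv ℝ ψ z v) = omega0 n u v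

/-- `ψ` is a symplectic homeomorphism of `E`: a homeomorphism which is a `C⁰`-limit
(uniformly on compact sets, together with inverses) of symplectomorphisms of `E` onto `E`. -/
def IsSympHomeo (n : ℕ) (ψ : E n ≃ₜ E n) : Prop :=
  ∃ Ψ : ℕ → E n ≃ E n,
    (∀ m, IsSymplecto n Set.univ (Ψ m)) ∧
    TendstoLocallyUniformly (fun m z => Ψ m z) (fun z => ψ z) Filter.atTop ∧
    TendstoLocallyUniformly (fun m z => (Ψ m).symm z) (fun z => ψ.symm z) Filter.atTop

/-- A fixed `k`-dimensional coordinate subspace `ℝᵏ × {0}` of `E`. -/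
def coordSubspace (n k : ℕ) : Set (E n) :=
  {z | (∀ i : Fin n, k ≤ (i : ℕ) → z.1 i = 0) ∧
       (∀ i : Fin n, k ≤ n + (i : ℕ) → z.2 i = 0)}

/-- `N` is a smooth `k`-dimensional submanifold of `E`. -/
def IsSubmanifold (n k : ℕ) (N : Set (E n)) : Prop :=
  ∀ p ∈ N, ∃ (V : Set (E n)) (Φ : E n → E n),
    IsOpen V ∧ p ∈ V ∧ IsOpen (Φ '' V) ∧ Set.InjOn Φ V ∧
    ContDiffOn ℝ (⊤ : ℕ∞) Φ V ∧
    (∃ g : E n → E n, ContDiffOn ℝ (⊤ : ℕ∞) g (Φ '' V) ∧ ∀ z ∈ V, g (Φ z) = z) ∧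
    Φ '' (N ∩ V) = coordSubspace n k ∩ Φ '' V

/-- The tangent space `T_pN`, as velocities of curves through `p` lying locally in `N`. -/
def TangentSet (n : ℕ) (N : Set (E n)) (p : E n) : Set (E n) :=
  {v | ∃ γ : ℝ → E n, γ 0 = p ∧ (∀ᶠ t in 𝓝 (0:ℝ), γ t ∈ N) ∧ HasDerivAt γ v 0}

/-- The symplectic orthogonal complement `T^{ω₀}`. -/
def symplOrth (n : ℕ) (T : Set (E n)) : Set (E n) :=
  {v | ∀ u ∈ T, omega0 n v u = 0}

/-- `N` is coisotropic: `(T_pN)^{ω₀} ⊆ T_pN` for all `p ∈ N`. -/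
def IsCoisotropic (n : ℕ) (N : Set (E n)) : Prop :=
  ∀ p ∈ N, symplOrth n (TangentSet n N p) ⊆ TangentSet n N p

/-- `N` is Lagrangian: `(T_pN)^{ω₀} = T_pN` for all `p ∈ N`. -/
def IsLagrangian (n : ℕ) (N : Set (E n)) : Prop :=
  ∀ p ∈ N, symplOrth n (TangentSet n N p) = TangentSet n N p

/-- `Σ_N`: Hamiltonian diffeomorphisms preserving `N`. -/
def SigmaGrp (n : ℕ) (N : Set (E n)) : Set (E n → E n) :=
  {φ | φ ∈ HamGrp n Set.univ ∧ φ '' N = N}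

/-- `Σ̄_N`: the closure of `Σ_N` in the Hofer metric. -/
def SigmaBar (n : ℕ) (N : Set (E n)) : Set (E n → E n) :=
  {φ | φ ∈ HamGrp n Set.univ ∧ ∀ ε : ℝ, 0 < ε →
    ∃ ψ ∈ SigmaGrp n N, ∃ χ : E n → E n,
      Function.LeftInverse χ ψ ∧ Function.RightInverse χ ψ ∧
      hoferNorm n Set.univ (χ ∘ φ) < ε}

/-- The rigid locus `R_N = ⋂_{φ ∈ Σ̄_N} φ⁻¹(N)`. -/
def rigidLocus (n : ℕ) (N : Set (E n)) : Set (E n) :=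
  ⋂ φ ∈ SigmaBar n N, φ ⁻¹' N


open Set Filter Metric

/-! ### Hamiltonian vector fields -/

theorem omega0_nondeg {n : ℕ} {a b : E n} (h : ∀ v, omega0 n a v = omega0 n b v) : a = b := by
  ext i
  · simpa [omega0, Pi.single_apply] using h (0, Pi.single i 1)
  · simpa [omega0, Pi.single_apply] using h (Pi.single i 1, 0)

theorem clm_eq_sum {n : ℕ} (L : E n →L[ℝ] ℝ) (v : E n) :
    L v = ∑ i, v.1 i * L (Pi.single i 1, 0) + ∑ i, v.2 i * L (0, Pi.single i 1) := by
  have h1 : v = (v.1, 0) + (0, v.2) := by simp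
  have hs : ∀ i : Fin n, (fun j => if i = j then (1 : ℝ) else 0) = Pi.single i 1 := fun i => by
    ext j; simp [Pi.single_apply, eq_comm]
  have h2 : L (v.1, 0) = ∑ i, v.1 i * L (Pi.single i 1, 0) := by
    have := (L.comp (ContinuousLinearMap.inl ℝ _ _)).toLinearMap.pi_apply_eq_sum_univ v.1
    simpa [hs] using this
  have h3 : L (0, v.2) = ∑ i, v.2 i * L (0, Pi.single i 1) := by
    have := (L.comp (ContinuousLinearMap.inr ℝ _ _)).toLinearMap.pi_apply_eq_sum_univ v.2
    simpa [hs] using this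
  rw [← h2, ← h3, ← map_add, ← h1]

theorem omega0_XH {n : ℕ} (H : ℝ × E n → ℝ) (t : ℝ) (z v : E n) :
    omega0 n (XH n H t z) v = fderiv ℝ (fun w => H (t, w)) z v := by
  rw [clm_eq_sum (fderiv ℝ (fun w => H (t, w)) z) v]
  simp only [omega0, XH, neg_mul, Finset.sum_neg_distrib, sub_neg_eq_add]
  rw [add_comm]
  simp only [mul_comm]

theorem AdmissibleH.diff {n : ℕ} {W : Set (E n)} {H : ℝ × E n → ℝ} (hH : AdmissibleH n W H) :
    Differentiable ℝ H :=
  hH.1.differentiable (by simp)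

theorem fderiv_slice {n : ℕ} {H : ℝ × E n → ℝ} (hH : Differentiable ℝ H) (t : ℝ) (z v : E n) :
    fderiv ℝ (fun w => H (t, w)) z v = fderiv ℝ H (t, z) (0, v) := by
  have h1 : HasFDerivAt (fun w : E n => (t, w)) (ContinuousLinearMap.inr ℝ ℝ (E n)) z :=
    hasFDerivAt_prodMk_right t z
  have := ((hH (t, z)).hasFDerivAt.comp z h1).fderiv
  rw [show (fun w => H (t, w)) = H ∘ fun w => (t, w) from rfl, this]
  simp

theorem XH_eq {n : ℕ} {H : ℝ × E n → ℝ} (hH : Differentiable ℝ H) (t : ℝ) (z : E n) :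
    XH n H t z = ((fun i => fderiv ℝ H (t, z) (0, (0, Pi.single i 1))),
      (fun i => -fderiv ℝ H (t, z) (0, (Pi.single i 1, 0)))) := by
  simp only [XH, fderiv_slice hH]

/-- The vector field of an admissible Hamiltonian is continuous, bounded, and Lipschitz in space
uniformly in time; the Cauchy–Lipschitz theory of its flow rests on these bounds. -/
theorem XH_regular {n : ℕ} {H : ℝ × E n → ℝ} (hH : AdmissibleH n univ H) :
    Continuous (fun p : ℝ × E n => XH n H p.1 p.2) ∧
    (∃ K, ∀ t, LipschitzWith K (XH n H t)) ∧ ∃ C : ℝ, ∀ t z, ‖XH n H t z‖ ≤ C := by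
  have hs : ContDiff ℝ 1 (fun p : ℝ × E n => XH n H p.1 p.2) := by
    simp only [XH_eq hH.diff]
    have h1 : ContDiff ℝ 1 (fderiv ℝ H) := hH.1.fderiv_right (m := 1) (by
      exact WithTop.coe_le_coe.2 (le_top : (1 + 1 : ℕ∞) ≤ ⊤))
    refine ContDiff.prodMk (contDiff_pi.2 fun i => ?_) (contDiff_pi.2 fun i => ?_)
    · exact h1.clm_apply contDiff_const
    · exact (h1.clm_apply contDiff_const).neg
  have hc : HasCompactSupport (fun p : ℝ × E n => XH n H p.1 p.2) := by
    have h1 : HasCompactSupport (fderiv ℝ H) := HasCompactSupport.fderiv ℝ hH.2.1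
    refine h1.mono fun p hp => ?_
    contrapose! hp
    simp only [Function.mem_support, not_not] at hp ⊢
    rw [XH_eq hH.diff, hp]
    ext <;> simp
  refine ⟨hs.continuous, ?_, ?_⟩
  · obtain ⟨K, hK⟩ := ContDiff.lipschitzWith_of_hasCompactSupport hc hs (by simp)
    refine ⟨K, fun t => LipschitzWith.of_dist_le_mul fun x y => ?_⟩
    simpa [Prod.dist_eq] using hK.dist_le_mul (t, x) (t, y)
  · obtain ⟨C, hC⟩ := hc.exists_bound_of_continuous hs.continuous
    exact ⟨C, fun t z => hC (t, z)⟩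

theorem AdmissibleH.eq_zero_of_nonpos {n : ℕ} {H : ℝ × E n → ℝ} (hH : AdmissibleH n univ H)
    {t : ℝ} (ht : t ≤ 0) (z : E n) : H (t, z) = 0 := by
  have hc : IsClosed {s : ℝ | H (s, z) = 0} :=
    isClosed_eq (hH.1.continuous.comp (by fun_prop)) continuous_const
  have : Iio (0 : ℝ) ⊆ {s | H (s, z) = 0} := fun s hs => by
    by_contra h
    exact absurd (hH.2.2 (subset_tsupport H h)).1.1 (not_le.2 hs)
  have := closure_minimal this hc
  rw [closure_Iio] at this
  exact this ht

theorem AdmissibleH.eq_zero_of_one_le {n : ℕ} {H : ℝ × E n → ℝ} (hH : AdmissibleH n univ H)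
    {t : ℝ} (ht : 1 ≤ t) (z : E n) : H (t, z) = 0 := by
  have hc : IsClosed {s : ℝ | H (s, z) = 0} :=
    isClosed_eq (hH.1.continuous.comp (by fun_prop)) continuous_const
  have : Ioi (1 : ℝ) ⊆ {s | H (s, z) = 0} := fun s hs => by
    by_contra h
    exact absurd (hH.2.2 (subset_tsupport H h)).1.2 (not_le.2 hs)
  have := closure_minimal this hc
  rw [closure_Ioi] at this
  exact this ht

theorem XH_eq_zero {n : ℕ} {H : ℝ × E n → ℝ} {t : ℝ} (h : ∀ z, H (t, z) = 0) (z : E n) :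
    XH n H t z = 0 := by
  have : (fun w => H (t, w)) = fun _ => 0 := funext h
  simp only [XH, this]
  ext <;> simp

/-! ### Hamiltonian flows -/

theorem IsHamFlow.cont {n : ℕ} {H : ℝ × E n → ℝ} {Φ : ℝ → E n → E n} (h : IsHamFlow n H Φ)
    (z : E n) : Continuous (fun s => Φ s z) :=
  continuous_iff_continuousAt.2 fun t => (h.2 z t).continuousAt

theorem IsHamFlow.eq_of_one_le {n : ℕ} {H : ℝ × E n → ℝ} {Φ : ℝ → E n → E n}
    (hH : AdmissibleH n univ H) (h : IsHamFlow n H Φ) {t : ℝ} (ht : 1 ≤ t) (z : E n) :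
    Φ t z = Φ 1 z := by
  refine constant_of_has_deriv_right_zero (a := 1) (b := t) (f := fun s => Φ s z)
    (h.cont z).continuousOn (fun s hs => ?_) t ⟨ht, le_rfl⟩
  have := (h.2 z s).hasDerivWithinAt (s := Ici s)
  rwa [XH_eq_zero (hH.eq_zero_of_one_le hs.1)] at this

theorem IsHamFlow.eq_of_nonpos {n : ℕ} {H : ℝ × E n → ℝ} {Φ : ℝ → E n → E n}
    (hH : AdmissibleH n univ H) (h : IsHamFlow n H Φ) {t : ℝ} (ht : t ≤ 0) (z : E n) :
    Φ t z = z := by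
  have := constant_of_has_deriv_right_zero (a := t) (b := 0) (f := fun s => Φ s z)
    (h.cont z).continuousOn (fun s hs => ?_) 0 ⟨ht, le_rfl⟩
  · rw [← this, h.1]
  have := (h.2 z s).hasDerivWithinAt (s := Ici s)
  rwa [XH_eq_zero (hH.eq_zero_of_nonpos hs.2.le)] at this

theorem IsHamFlow.continuous_one {n : ℕ} {H : ℝ × E n → ℝ} {Φ : ℝ → E n → E n}
    (hH : AdmissibleH n univ H) (h : IsHamFlow n H Φ) : Continuous (Φ 1) := by
  obtain ⟨-, ⟨K, hK⟩, -⟩ := XH_regular hH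
  refine LipschitzWith.continuous (K := Real.toNNReal (Real.exp K)) <|
    LipschitzWith.of_dist_le_mul fun x y => ?_
  have := dist_le_of_trajectories_ODE (a := 0) (b := 1) hK (h.cont x).continuousOn
    (fun t _ => (h.2 x t).hasDerivWithinAt) (h.cont y).continuousOn
    (fun t _ => (h.2 y t).hasDerivWithinAt) (δ := dist x y) (by simp [h.1]) 1 (by simp)
  rw [Real.coe_toNNReal _ (Real.exp_pos _).le, mul_comm]
  simpa using this

/-- Injectivity is backward uniqueness; surjectivity comes from solving the equation backward
from time `1`, which is possible since the vector field is bounded. -/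
theorem IsHamFlow.bijective_one {n : ℕ} {H : ℝ × E n → ℝ} {Φ : ℝ → E n → E n}
    (hH : AdmissibleH n univ H) (h : IsHamFlow n H Φ) : Function.Bijective (Φ 1) := by
  obtain ⟨hcont, ⟨K, hK⟩, ⟨C, hC⟩⟩ := XH_regular hH
  constructor
  · intro x y hxy
    have := ODE_solution_unique_univ (v := XH n H) (s := fun _ => univ) (t₀ := 1)
      (fun t => (hK t).lipschitzOnWith) (fun t => ⟨h.2 x t, trivial⟩)
      (fun t => ⟨h.2 y t, trivial⟩) hxy
    simpa [h.1] using congrFun this 0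
  · intro w
    have hpl : IsPicardLindelof (XH n H) (tmin := 0) (tmax := 1) ⟨1, by simp⟩ w
        C.toNNReal 0 C.toNNReal K :=
      { lipschitzOnWith := fun t _ => (hK t).lipschitzOnWith
        continuousOn := fun x _ =>
          (hcont.comp (by fun_prop : Continuous fun t : ℝ => (t, x))).continuousOn
        norm_le := fun t _ x _ => (hC t x).trans (Real.le_coe_toNNReal C)
        mul_max_le := by simp }
    obtain ⟨γ, hγ1, hγ⟩ := hpl.exists_eq_forall_mem_Icc_hasDerivWithinAt₀
    refine ⟨γ 0, ?_⟩
    have := ODE_solution_unique (a := 0) (b := 1) hK (h.cont (γ 0)).continuousOn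
      (fun t _ => (h.2 _ t).hasDerivWithinAt) (g := γ)
      (fun t ht => (hγ t ht).continuousWithinAt)
      (fun t ht => ((hγ t (Ico_subset_Icc_self ht)).mono_of_mem_nhdsWithin
        (Icc_mem_nhdsGE_of_mem ht))) (by simp [h.1])
    exact (this (by simp : (1 : ℝ) ∈ Icc 0 1)).trans hγ1

/-! ### The oscillation of a Hamiltonian and the Hofer length -/

/-- The oscillation `sup H(t,·) − inf H(t,·)`, the integrand of `HNorm`. -/
def oscH (n : ℕ) (H : ℝ × E n → ℝ) (t : ℝ) : ℝ :=
  (⨆ z, H (t, z)) - ⨅ z, H (t, z)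

theorem HNorm_eq (n : ℕ) (H : ℝ × E n → ℝ) : HNorm n H = ∫ t in (0:ℝ)..1, oscH n H t := rfl

theorem oscH_eq_zero {n : ℕ} {H : ℝ × E n → ℝ} {t : ℝ} (h : ∀ z, H (t, z) = 0) :
    oscH n H t = 0 := by
  simp [oscH, h]

/-- `E` is not compact, so one point `z₀` outside the spatial support suffices to make
`H(t,·)` attain all its values on the fixed compact set `snd(supp H) ∪ {z₀}`. -/
theorem exists_compact_range {n : ℕ} (hn : 1 ≤ n) {H : ℝ × E n → ℝ} (hH : AdmissibleH n univ H) :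
    ∃ K : Set (E n), IsCompact K ∧ ∀ t, (fun z => H (t, z)) '' K = range fun z => H (t, z) := by
  have : Nonempty (Fin n) := ⟨⟨0, hn⟩⟩
  have : NoncompactSpace (E n) := NormedSpace.noncompactSpace ℝ (E n)
  have hK : IsCompact (Prod.snd '' tsupport H) := hH.2.1.image continuous_snd
  obtain ⟨z₀, hz₀⟩ := (ne_univ_iff_exists_notMem _).1 hK.ne_univ
  have hzero : ∀ t z, z ∉ Prod.snd '' tsupport H → H (t, z) = 0 := fun t z hz => by
    by_contra h
    exact hz ⟨(t, z), subset_tsupport H h, rfl⟩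
  refine ⟨insert z₀ (Prod.snd '' tsupport H), hK.insert z₀, fun t => ?_⟩
  refine (image_subset_range _ _).antisymm ?_
  rintro _ ⟨z, rfl⟩
  by_cases hz : z ∈ Prod.snd '' tsupport H
  · exact ⟨z, Or.inr hz, rfl⟩
  · exact ⟨z₀, Or.inl rfl, by simp only [hzero t z hz, hzero t z₀ hz₀]⟩

theorem continuous_oscH {n : ℕ} (hn : 1 ≤ n) {H : ℝ × E n → ℝ} (hH : AdmissibleH n univ H) :
    Continuous (oscH n H) := by
  obtain ⟨K, hK, hr⟩ := exists_compact_range hn hH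
  have hc : Continuous ↿(fun (t : ℝ) (z : E n) => H (t, z)) := hH.1.continuous
  have : oscH n H = fun t => sSup ((fun z => H (t, z)) '' K) - sInf ((fun z => H (t, z)) '' K) := by
    ext t
    rw [hr t]
    rfl
  rw [this]
  exact (hK.continuous_sSup hc).sub (hK.continuous_sInf hc)

theorem oscH_nonneg {n : ℕ} (hn : 1 ≤ n) {H : ℝ × E n → ℝ} (hH : AdmissibleH n univ H) (t : ℝ) :
    0 ≤ oscH n H t := by
  obtain ⟨K, hK, hr⟩ := exists_compact_range hn hH
  have hc : Continuous (fun z : E n => H (t, z)) := hH.1.continuous.comp (by fun_prop)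
  have hb := hK.image hc
  rw [hr t] at hb
  exact sub_nonneg.2 ((ciInf_le hb.bddBelow 0).trans (le_ciSup hb.bddAbove 0))

theorem HNorm_nonneg {n : ℕ} (hn : 1 ≤ n) {H : ℝ × E n → ℝ} (hH : AdmissibleH n univ H) :
    0 ≤ HNorm n H :=
  intervalIntegral.integral_nonneg zero_le_one fun t _ => oscH_nonneg hn hH t

/-! ### Maps generated with small energy -/

/-- `φ` is the time-one map of an admissible Hamiltonian on `E` of Hofer length less than `c`. -/
def Cheap (n : ℕ) (φ : E n → E n) (c : ℝ) : Prop :=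
  ∃ H Φ, AdmissibleH n univ H ∧ IsHamFlow n H Φ ∧ φ = Φ 1 ∧ HNorm n H < c

theorem mem_HamGrp_iff {n : ℕ} {φ : E n → E n} : φ ∈ HamGrp n univ ↔ ∃ c, Cheap n φ c := by
  constructor
  · rintro ⟨H, Φ, h1, h2, h3⟩
    exact ⟨_, H, Φ, h1, h2, h3, lt_add_one _⟩
  · rintro ⟨c, H, Φ, h1, h2, h3, -⟩
    exact ⟨H, Φ, h1, h2, h3⟩

theorem Cheap.hoferNorm_lt {n : ℕ} (hn : 1 ≤ n) {φ : E n → E n} {c : ℝ} (h : Cheap n φ c) :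
    hoferNorm n univ φ < c := by
  obtain ⟨H, Φ, h1, h2, h3, h4⟩ := h
  refine csInf_lt_of_lt ⟨0, ?_⟩ ⟨H, Φ, h1, h2, h3, rfl⟩ h4
  rintro _ ⟨H', Φ', hadm, -, -, rfl⟩
  exact HNorm_nonneg hn hadm

/-- Membership in `Ham(E)` has to be assumed: outside it the infimum defining the Hofer norm is
over the empty set and takes the value `0`. -/
theorem Cheap.of_hoferNorm_lt {n : ℕ} {φ : E n → E n} {c : ℝ} (hφ : φ ∈ HamGrp n univ)
    (h : hoferNorm n univ φ < c) : Cheap n φ c := by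
  obtain ⟨H, Φ, h1, h2, h3⟩ := hφ
  have hne : {c | ∃ H Φ, AdmissibleH n univ H ∧ IsHamFlow n H Φ ∧ φ = Φ 1 ∧
      c = HNorm n H}.Nonempty := ⟨_, H, Φ, h1, h2, h3, rfl⟩
  obtain ⟨_, ⟨H', Φ', h1', h2', h3', rfl⟩, hlt⟩ := exists_lt_of_csInf_lt hne h
  exact ⟨H', Φ', h1', h2', h3', hlt⟩

theorem Cheap.continuous {n : ℕ} {φ : E n → E n} {c : ℝ} (h : Cheap n φ c) : Continuous φ := by
  obtain ⟨H, Φ, h1, h2, rfl, -⟩ := h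
  exact h2.continuous_one h1

theorem Cheap.exists_equiv {n : ℕ} {φ : E n → E n} {c : ℝ} (h : Cheap n φ c) :
    ∃ e : E n ≃ E n, ⇑e = φ := by
  obtain ⟨H, Φ, h1, h2, rfl, -⟩ := h
  exact ⟨Equiv.ofBijective _ (h2.bijective_one h1), rfl⟩

theorem Cheap.id {n : ℕ} {c : ℝ} (hc : 0 < c) : Cheap n (fun z => z) c := by
  refine ⟨fun _ => 0, fun _ z => z, ⟨contDiff_const, ?_, ?_⟩, ⟨fun _ => rfl, fun z t => ?_⟩, rfl, ?_⟩
  · exact HasCompactSupport.zero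
  · simp [tsupport]
  · rw [XH_eq_zero (fun _ => rfl)]
    exact hasDerivAt_const t z
  · simpa [HNorm] using hc

/-- Running the Hamiltonian isotopy backward generates the inverse with the same length. -/
theorem Cheap.symm {n : ℕ} {e : E n ≃ E n} {c : ℝ} (h : Cheap n e c) : Cheap n e.symm c := by
  obtain ⟨H, Φ, h1, h2, h3, h4⟩ := h
  set T : ℝ × E n ≃ₜ ℝ × E n :=
    ((Homeomorph.subLeft (1 : ℝ)).prodCongr (Homeomorph.refl (E n))) with hT
  have hTa : ∀ p, T p = (1 - p.1, p.2) := fun p => rfl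
  have hsupp : tsupport (fun p : ℝ × E n => -H (1 - p.1, p.2)) = T ⁻¹' tsupport H := by
    rw [← tsupport_comp_eq_preimage H T]
    simp only [tsupport]
    congr 1
    ext p
    simp [hTa]
  refine ⟨fun p => -H (1 - p.1, p.2), fun t z => Φ (1 - t) (e.symm z), ⟨?_, ?_, ?_⟩,
    ⟨fun z => ?_, fun z t => ?_⟩, ?_, ?_⟩
  · exact (h1.1.comp (by fun_prop)).neg
  · rw [hsupp]
    exact T.isCompact_preimage.2 h1.2.1
  · rw [hsupp]
    intro p hp
    have := (h1.2.2 hp).1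
    simp only [hTa, mem_Icc] at this
    exact ⟨⟨by linarith, by linarith⟩, trivial⟩
  · simp [← h3]
  · have hd := (h2.2 (e.symm z) (1 - t)).scomp t ((hasDerivAt_id t).const_sub 1)
    have hv : XH n (fun p => -H (1 - p.1, p.2)) t (Φ (1 - t) (e.symm z)) =
        (-1 : ℝ) • XH n H (1 - t) (Φ (1 - t) (e.symm z)) := by
      simp only [XH, fderiv_fun_neg]
      ext <;> simp
    rw [hv]
    exact hd
  · ext1 z
    simp [h2.1]
  · have : ∀ t, oscH n (fun p => -H (1 - p.1, p.2)) t = oscH n H (1 - t) := fun t => by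
      have a1 := Real.mul_iSup_of_nonpos (r := -1) (by norm_num) fun z => H (1 - t, z)
      have a2 := Real.mul_iInf_of_nonpos (r := -1) (by norm_num) fun z => H (1 - t, z)
      simp only [neg_one_mul] at a1 a2
      simp only [oscH, ← a1, ← a2]
      ring
    rw [HNorm_eq] at h4 ⊢
    simp only [this]
    rw [intervalIntegral.integral_comp_sub_left (fun t => oscH n H t) 1]
    simpa using h4

/-- The isotopies are run one after the other, each at double speed. As `H(t,·)` vanishes for
`t ∉ (0,1)`, the concatenated Hamiltonian is smooth without further reparametrization. -/
theorem Cheap.comp {n : ℕ} (hn : 1 ≤ n) {φ φ' : E n → E n} {c c' : ℝ} (h' : Cheap n φ' c')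
    (h : Cheap n φ c) : Cheap n (φ' ∘ φ) (c + c') := by
  obtain ⟨H, Φ, h1, h2, rfl, h4⟩ := h
  obtain ⟨K, Φ', k1, k2, rfl, k4⟩ := h'
  set T : ℝ × E n ≃ₜ ℝ × E n :=
    ((Homeomorph.mulLeft₀ (2 : ℝ) two_ne_zero).prodCongr (Homeomorph.refl (E n))) with hT
  have hTa : ∀ p, T p = (2 * p.1, p.2) := fun p => rfl
  set S : ℝ × E n ≃ₜ ℝ × E n := (((Homeomorph.mulLeft₀ (2 : ℝ) two_ne_zero).trans
    (Homeomorph.subRight (1 : ℝ))).prodCongr (Homeomorph.refl (E n))) with hS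
  have hSa : ∀ p, S p = (2 * p.1 - 1, p.2) := fun p => rfl
  set L : ℝ × E n → ℝ := fun p => 2 * H (2 * p.1, p.2) + 2 * K (2 * p.1 - 1, p.2) with hL
  have hsupp : tsupport L ⊆ T ⁻¹' tsupport H ∪ S ⁻¹' tsupport K := by
    refine closure_minimal (fun p hp => ?_)
      (((isClosed_tsupport H).preimage T.continuous).union
        ((isClosed_tsupport K).preimage S.continuous))
    by_contra hcon
    simp only [mem_union, mem_preimage, not_or, hTa, hSa] at hcon
    apply hp
    simp [hL, image_eq_zero_of_notMem_tsupport hcon.1, image_eq_zero_of_notMem_tsupport hcon.2]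
  have hX : ∀ t z, XH n L t z = (2 : ℝ) • XH n H (2 * t) z + (2 : ℝ) • XH n K (2 * t - 1) z := by
    intro t z
    have hH : DifferentiableAt ℝ (fun w => H (2 * t, w)) z :=
      (h1.diff _).comp z (by fun_prop)
    have hK : DifferentiableAt ℝ (fun w => K (2 * t - 1, w)) z :=
      (k1.diff _).comp z (by fun_prop)
    have : fderiv ℝ (fun w => L (t, w)) z =
        (2 : ℝ) • fderiv ℝ (fun w => H (2 * t, w)) z +
        (2 : ℝ) • fderiv ℝ (fun w => K (2 * t - 1, w)) z :=
      ((hH.hasFDerivAt.const_mul 2).add (hK.hasFDerivAt.const_mul 2)).fderiv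
    simp only [XH, this]
    ext <;> simp
    ring
  refine ⟨L, fun t z => Φ (2 * t) z + Φ' (2 * t - 1) (Φ 1 z) - Φ 1 z, ⟨?_, ?_, ?_⟩,
    ⟨fun z => ?_, fun z t => ?_⟩, ?_, ?_⟩
  · exact (contDiff_const.mul (h1.1.comp (by fun_prop))).add
      (contDiff_const.mul (k1.1.comp (by fun_prop)))
  · exact ((T.isCompact_preimage.2 h1.2.1).union (S.isCompact_preimage.2 k1.2.1)).of_isClosed_subset
      (isClosed_tsupport L) hsupp
  · intro p hp
    rcases hsupp hp with hp | hp
    · have := (h1.2.2 hp).1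
      simp only [hTa, mem_Icc] at this
      exact ⟨⟨by linarith, by linarith⟩, trivial⟩
    · have := (k1.2.2 hp).1
      simp only [hSa, mem_Icc] at this
      exact ⟨⟨by linarith, by linarith⟩, trivial⟩
  · simp [h2.1, k2.eq_of_nonpos k1 (by norm_num : (-1 : ℝ) ≤ 0)]
  · have d1 := (h2.2 z (2 * t)).scomp t ((hasDerivAt_id t).const_mul 2)
    have d2 := (k2.2 (Φ 1 z) (2 * t - 1)).scomp t (((hasDerivAt_id t).const_mul 2).sub_const 1)
    have hv : XH n L t (Φ (2 * t) z + Φ' (2 * t - 1) (Φ 1 z) - Φ 1 z) =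
        (2 * 1 : ℝ) • XH n H (2 * t) (Φ (2 * t) z) +
        (2 * 1 : ℝ) • XH n K (2 * t - 1) (Φ' (2 * t - 1) (Φ 1 z)) := by
      rw [hX, mul_one]
      rcases le_total (2 * t) 1 with ht | ht
      · -- during the first half the second flow rests at its initial point
        have ht' : 2 * t - 1 ≤ 0 := by linarith
        simp only [XH_eq_zero (k1.eq_zero_of_nonpos ht'), k2.eq_of_nonpos k1 ht',
          add_sub_cancel_right]
      · -- during the second half the first flow rests at its end point
        simp only [XH_eq_zero (h1.eq_zero_of_one_le ht), h2.eq_of_one_le h1 ht,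
          add_sub_cancel_left]
    rw [hv]
    exact (d1.add d2).sub_const (Φ 1 z)
  · ext1 z
    simp only [Function.comp_apply, mul_one, h2.eq_of_one_le h1 (by norm_num : (1 : ℝ) ≤ 2)]
    norm_num
  · have hosc : ∀ t, oscH n L t = 2 * oscH n H (2 * t) + 2 * oscH n K (2 * t - 1) := by
      intro t
      rcases le_total (2 * t) 1 with ht | ht
      · have hz := k1.eq_zero_of_nonpos (by linarith : 2 * t - 1 ≤ 0)
        rw [oscH_eq_zero hz]
        simp only [oscH, hL, hz, mul_zero, add_zero, mul_sub]
        rw [Real.mul_iSup_of_nonneg zero_le_two, Real.mul_iInf_of_nonneg zero_le_two]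
      · have hz := h1.eq_zero_of_one_le ht
        rw [oscH_eq_zero hz]
        simp only [oscH, hL, hz, mul_zero, zero_add, mul_sub]
        rw [Real.mul_iSup_of_nonneg zero_le_two, Real.mul_iInf_of_nonneg zero_le_two]
    have cH := continuous_oscH hn h1
    have cK := continuous_oscH hn k1
    have zH : ∫ t in (1:ℝ)..2, oscH n H t = 0 := by
      rw [intervalIntegral.integral_congr (g := fun _ => 0) fun t ht => ?_]
      · simp
      · rw [uIcc_of_le one_le_two] at ht
        exact oscH_eq_zero (h1.eq_zero_of_one_le ht.1)
    have zK : ∫ t in (-1:ℝ)..0, oscH n K t = 0 := by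
      rw [intervalIntegral.integral_congr (g := fun _ => 0) fun t ht => ?_]
      · simp
      · rw [uIcc_of_le (by norm_num)] at ht
        exact oscH_eq_zero (k1.eq_zero_of_nonpos ht.2)
    have e1 : ∫ t in (0:ℝ)..1, 2 * oscH n H (2 * t) = HNorm n H := by
      rw [intervalIntegral.integral_const_mul, intervalIntegral.mul_integral_comp_mul_left, HNorm_eq,
        ← intervalIntegral.integral_add_adjacent_intervals (b := 1)
          (cH.intervalIntegrable _ _) (cH.intervalIntegrable _ _)]
      norm_num [zH]
    have e2 : ∫ t in (0:ℝ)..1, 2 * oscH n K (2 * t - 1) = HNorm n K := by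
      rw [intervalIntegral.integral_const_mul, intervalIntegral.mul_integral_comp_mul_sub, HNorm_eq,
        ← intervalIntegral.integral_add_adjacent_intervals (b := 0)
          (cK.intervalIntegrable _ _) (cK.intervalIntegrable _ _)]
      norm_num [zK]
    have : HNorm n L = HNorm n H + HNorm n K := by
      rw [HNorm_eq]
      simp only [hosc]
      rw [intervalIntegral.integral_add
        (Continuous.intervalIntegrable (by fun_prop) _ _)
        (Continuous.intervalIntegrable (by fun_prop) _ _), e1, e2]
    linarith

/-! ### Symplectomorphisms and conjugation invariance -/

/-- A symplectomorphism of `E` onto `E`, as a bijection smooth in both directions that preserves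
the symplectic form. -/
structure IsSympl (n : ℕ) (s : E n ≃ E n) : Prop where
  smooth : ContDiff ℝ (⊤ : ℕ∞) s
  smooth_symm : ContDiff ℝ (⊤ : ℕ∞) s.symm
  omega : ∀ z u v, omega0 n (fderiv ℝ s z u) (fderiv ℝ s z v) = omega0 n u v

theorem IsSympl.fderiv_fderiv_symm {n : ℕ} {s : E n ≃ E n} (h : IsSympl n s) (z v : E n) :
    fderiv ℝ s z (fderiv ℝ s.symm (s z) v) = v := by
  have h1 := (h.smooth.differentiable (by simp) z).hasFDerivAt
  have h2 := (h.smooth_symm.differentiable (by simp) (s z)).hasFDerivAt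
  have h3 : HasFDerivAt s (fderiv ℝ s z) (s.symm (s z)) := by simpa using h1
  have h4 := h3.comp (s z) h2
  have h5 : (s ∘ s.symm) = fun z => z := by ext1 z; simp
  rw [h5] at h4
  have := h4.unique (hasFDerivAt_id (s z))
  simpa using congrArg (fun L => L v) this

theorem IsSympl.symm {n : ℕ} {s : E n ≃ E n} (h : IsSympl n s) : IsSympl n s.symm := by
  refine ⟨h.smooth_symm, by simpa using h.smooth, fun z u v => ?_⟩
  obtain ⟨w, rfl⟩ := s.surjective z
  rw [← h.omega w]
  simp only [h.fderiv_fderiv_symm]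

theorem IsSymplecto.isSympl {n : ℕ} {s : E n ≃ E n} (h : IsSymplecto n univ s) : IsSympl n s := by
  obtain ⟨-, -, -, h1, ⟨g, hg, hgs⟩, h2⟩ := h
  have : g = s.symm := by
    ext1 z
    obtain ⟨w, rfl⟩ := s.surjective z
    simp [hgs w]
  rw [image_univ, s.surjective.range_eq, this] at hg
  exact ⟨contDiffOn_univ.1 h1, contDiffOn_univ.1 hg, fun z => h2 z trivial⟩

/-- Conjugation by a symplectomorphism transports `H` to `H ∘ s⁻¹` and keeps its length. -/
theorem Cheap.conj {n : ℕ} {φ : E n → E n} {c : ℝ} (h : Cheap n φ c) {s : E n ≃ E n}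
    (hs : IsSympl n s) : Cheap n (s ∘ φ ∘ s.symm) c := by
  obtain ⟨H, Φ, h1, h2, rfl, h4⟩ := h
  set S : E n ≃ₜ E n := { s with
    continuous_toFun := hs.smooth.continuous
    continuous_invFun := hs.smooth_symm.continuous } with hS
  set T : ℝ × E n ≃ₜ ℝ × E n := (Homeomorph.refl ℝ).prodCongr S.symm with hT
  have hTa : ∀ p, T p = (p.1, s.symm p.2) := fun p => rfl
  have hsupp : tsupport (fun p : ℝ × E n => H (p.1, s.symm p.2)) = T ⁻¹' tsupport H := by
    rw [← tsupport_comp_eq_preimage H T]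
    rfl
  have hX : ∀ t z, XH n (fun p => H (p.1, s.symm p.2)) t (s z) = fderiv ℝ s z (XH n H t z) := by
    intro t z
    refine omega0_nondeg fun v => ?_
    rw [omega0_XH]
    have hd1 : DifferentiableAt ℝ (fun w => H (t, w)) (s.symm (s z)) :=
      (h1.diff _).comp _ (by fun_prop)
    have hd2 := hs.smooth_symm.differentiable (by simp) (s z)
    have : fderiv ℝ (fun w => H (t, s.symm w)) (s z) =
        (fderiv ℝ (fun w => H (t, w)) (s.symm (s z))).comp (fderiv ℝ s.symm (s z)) :=
      fderiv_comp (s z) hd1 hd2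
    rw [this]
    simp only [Equiv.symm_apply_apply, ContinuousLinearMap.comp_apply]
    rw [← omega0_XH, ← hs.omega z, hs.fderiv_fderiv_symm]
  refine ⟨fun p => H (p.1, s.symm p.2), fun t z => s (Φ t (s.symm z)), ⟨?_, ?_, ?_⟩,
    ⟨fun z => ?_, fun z t => ?_⟩, rfl, ?_⟩
  · have := hs.smooth_symm
    exact h1.1.comp (contDiff_fst.prodMk (this.comp contDiff_snd))
  · rw [hsupp]
    exact T.isCompact_preimage.2 h1.2.1
  · rw [hsupp]
    exact fun p hp => ⟨(h1.2.2 hp).1, trivial⟩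
  · simp [h2.1]
  · rw [hX]
    exact (hs.smooth.differentiable (by simp) _).hasFDerivAt.comp_hasDerivAt t
      (h2.2 (s.symm z) t)
  · refine lt_of_eq_of_lt ?_ h4
    rw [HNorm_eq, HNorm_eq]
    congr 1
    ext1 t
    simp only [oscH]
    rw [s.symm.surjective.iSup_comp (fun z => H (t, z)),
      s.symm.surjective.iInf_comp (fun z => H (t, z))]

/-! ### Affine symplectic maps are doubly transitive -/

theorem omega0_add_left {n : ℕ} (a b c : E n) :
    omega0 n (a + b) c = omega0 n a c + omega0 n b c := by
  simp [omega0, add_mul, Finset.sum_add_distrib]; ring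

theorem omega0_add_right {n : ℕ} (a b c : E n) :
    omega0 n c (a + b) = omega0 n c a + omega0 n c b := by
  simp [omega0, mul_add, Finset.sum_add_distrib]; ring

theorem omega0_smul_left {n : ℕ} (r : ℝ) (a c : E n) :
    omega0 n (r • a) c = r * omega0 n a c := by
  simp [omega0, mul_sub, Finset.mul_sum, mul_assoc]

theorem omega0_smul_right {n : ℕ} (r : ℝ) (a c : E n) :
    omega0 n c (r • a) = r * omega0 n c a := by
  simp [omega0, mul_sub, Finset.mul_sum, mul_left_comm]

theorem omega0_swap {n : ℕ} (a b : E n) : omega0 n a b = -omega0 n b a := by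
  simp [omega0, mul_comm]

theorem omega0_self {n : ℕ} (a : E n) : omega0 n a a = 0 := by
  simp [omega0, mul_comm]

/-- The symplectic transvection `x ↦ x + c ω₀(x,u) u`. -/
def transvec (n : ℕ) (c : ℝ) (u : E n) : E n →ₗ[ℝ] E n where
  toFun x := x + (c * omega0 n x u) • u
  map_add' x y := by rw [omega0_add_left, mul_add, add_smul]; abel
  map_smul' r x := by
    rw [omega0_smul_left, RingHom.id_apply, smul_add, smul_smul]
    congr 2
    ring

theorem transvec_apply {n : ℕ} (c : ℝ) (u x : E n) :
    transvec n c u x = x + (c * omega0 n x u) • u := rfl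

theorem transvec_neg {n : ℕ} (c : ℝ) (u x : E n) :
    transvec n (-c) u (transvec n c u x) = x := by
  simp only [transvec_apply, omega0_add_left, omega0_smul_left, omega0_self]
  module

theorem IsSympl.trans {n : ℕ} {s t : E n ≃ E n} (hs : IsSympl n s) (ht : IsSympl n t) :
    IsSympl n (s.trans t) := by
  refine ⟨ht.smooth.comp hs.smooth, hs.smooth_symm.comp ht.smooth_symm, fun z u v => ?_⟩
  have : fderiv ℝ (s.trans t) z = (fderiv ℝ t (s z)).comp (fderiv ℝ s z) :=
    fderiv_comp z (ht.smooth.differentiable (by simp) _) (hs.smooth.differentiable (by simp) _)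
  rw [this]
  simp [ht.omega, hs.omega]

theorem isSympl_add {n : ℕ} (a : E n) : IsSympl n (Equiv.addRight a) := by
  refine ⟨?_, ?_, fun z u v => ?_⟩
  · exact contDiff_id.add contDiff_const
  · simp only [Equiv.addRight_symm]
    exact contDiff_id.add contDiff_const
  · have : fderiv ℝ (Equiv.addRight a : E n → E n) z = ContinuousLinearMap.id ℝ _ :=
      ((hasFDerivAt_id z).add_const a).fderiv
    rw [this]
    rfl

theorem exists_transvec {n : ℕ} (c : ℝ) (u : E n) :
    ∃ s : E n ≃ E n, IsSympl n s ∧ ∀ x, s x = x + (c * omega0 n x u) • u := by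
  refine ⟨⟨transvec n c u, transvec n (-c) u, transvec_neg c u, fun x => ?_⟩, ⟨?_, ?_, ?_⟩,
    fun x => rfl⟩
  · simpa using transvec_neg (-c) u x
  · exact (transvec n c u).toContinuousLinearMap.contDiff
  · exact (transvec n (-c) u).toContinuousLinearMap.contDiff
  · intro z a b
    have : fderiv ℝ (transvec n c u) z = (transvec n c u).toContinuousLinearMap :=
      (transvec n c u).toContinuousLinearMap.fderiv
    simp only [Equiv.coe_fn_mk, this, LinearMap.coe_toContinuousLinearMap', transvec_apply,
      omega0_add_left, omega0_add_right, omega0_smul_left, omega0_smul_right, omega0_self]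
    rw [omega0_swap u b]
    ring

theorem exists_linear_of_omega_ne {n : ℕ} {v w : E n} (h : omega0 n v w ≠ 0) :
    ∃ s : E n ≃ E n, IsSympl n s ∧ s 0 = 0 ∧ s v = w := by
  obtain ⟨s, hs, hsx⟩ := exists_transvec (omega0 n v w)⁻¹ (w - v)
  refine ⟨s, hs, ?_, ?_⟩
  · simp [hsx, omega0]
  · have : omega0 n v (w - v) = omega0 n v w := by
      rw [sub_eq_add_neg, ← neg_one_smul ℝ v, omega0_add_right, omega0_smul_right, omega0_self]
      ring
    rw [hsx, this, inv_mul_cancel₀ h]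
    module

/-- The intermediate vector is chosen off the two hyperplanes orthogonal to `v` and to `w`. -/
theorem exists_omega_ne_ne {n : ℕ} {v w : E n} (hv : v ≠ 0) (hw : w ≠ 0) :
    ∃ x, omega0 n v x ≠ 0 ∧ omega0 n x w ≠ 0 := by
  have key : ∀ v : E n, v ≠ 0 → ∃ x, omega0 n v x ≠ 0 := fun v hv => by
    by_contra! h
    exact hv (omega0_nondeg fun x => by rw [h x]; simp [omega0])
  obtain ⟨x, hx⟩ := key v hv
  obtain ⟨y, hy⟩ := key w hw
  rw [omega0_swap, neg_ne_zero] at hy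
  by_cases h1 : omega0 n x w = 0
  · by_cases h2 : omega0 n v y = 0
    · refine ⟨x + y, ?_, ?_⟩
      · rwa [omega0_add_right, h2, add_zero]
      · rwa [omega0_add_left, h1, zero_add]
    · exact ⟨y, h2, hy⟩
  · exact ⟨x, hx, h1⟩

/-- Translations reduce this to mapping one nonzero vector to another, which two symplectic
transvections achieve. -/
theorem exists_isSympl_map_pair {n : ℕ} {q q' a b : E n} (hq : q ≠ q') (hab : a ≠ b) :
    ∃ s : E n ≃ E n, IsSympl n s ∧ s q = a ∧ s q' = b := by
  obtain ⟨x, hx1, hx2⟩ := exists_omega_ne_ne (sub_ne_zero.2 hq.symm) (sub_ne_zero.2 hab.symm)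
  obtain ⟨s, hs, hs0, hs1⟩ := exists_linear_of_omega_ne hx1
  obtain ⟨t, ht, ht0, ht1⟩ := exists_linear_of_omega_ne hx2
  refine ⟨(((Equiv.addRight (-q)).trans s).trans t).trans (Equiv.addRight a),
    (((isSympl_add _).trans hs).trans ht).trans (isSympl_add _), ?_, ?_⟩
  · simp [hs0, ht0]
  · rw [sub_eq_add_neg] at hs1
    simp [hs1, ht1]

/-! ### Explicit Hamiltonian twists -/

/-- The Euclidean inner product on `E`. -/
def ip (n : ℕ) (z w : E n) : ℝ := (∑ i, z.1 i * w.1 i) + ∑ i, z.2 i * w.2 i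

/-- The complex structure `J(x,y) = (y,−x)`. -/
def Jop (n : ℕ) : E n →L[ℝ] E n :=
  (ContinuousLinearMap.snd ℝ _ _).prod (-ContinuousLinearMap.fst ℝ _ _)

theorem Jop_apply {n : ℕ} (w : E n) : Jop n w = (w.2, -w.1) := rfl

theorem Jop_Jop {n : ℕ} (w : E n) : Jop n (Jop n w) = -w := by
  simp [Jop_apply, Prod.ext_iff]

theorem omega0_J_left {n : ℕ} (w v : E n) : omega0 n (Jop n w) v = ip n w v := by
  simp [omega0, ip, Jop_apply]; ring

theorem ip_comm {n : ℕ} (w v : E n) : ip n w v = ip n v w := by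
  simp [ip, mul_comm]

theorem omega0_J_right {n : ℕ} (w v : E n) : omega0 n w (Jop n v) = -ip n w v := by
  rw [omega0_swap, omega0_J_left, ip_comm]

/-- Rotation by the angle `θ` in every complex line. -/
def rot (n : ℕ) (θ : ℝ) (w : E n) : E n := Real.cos θ • w + Real.sin θ • Jop n w

theorem omega0_J_J {n : ℕ} (w v : E n) : omega0 n (Jop n w) (Jop n v) = omega0 n w v := by
  simp [omega0, Jop_apply]; ring

theorem omega0_rot {n : ℕ} (θ : ℝ) (a b : E n) :
    omega0 n (rot n θ a) (rot n θ b) = omega0 n a b := by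
  simp only [rot, omega0_add_left, omega0_add_right, omega0_smul_left, omega0_smul_right]
  simp only [omega0_J_J]
  simp only [omega0_J_left, omega0_J_right]
  linear_combination omega0 n a b * Real.sin_sq_add_cos_sq θ

theorem Jop_rot {n : ℕ} (θ : ℝ) (w : E n) : Jop n (rot n θ w) = rot n θ (Jop n w) := by
  simp [rot]

theorem ip_rot {n : ℕ} (θ : ℝ) (w : E n) : ip n (rot n θ w) (rot n θ w) = ip n w w := by
  rw [← omega0_J_left, Jop_rot, omega0_rot, omega0_J_left]

theorem rot_neg_rot {n : ℕ} (θ : ℝ) (w : E n) : rot n (-θ) (rot n θ w) = w := by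
  have h := Real.sin_sq_add_cos_sq θ
  simp only [rot, map_add, map_smul, Jop_Jop, Real.cos_neg, Real.sin_neg]
  calc _ = (Real.sin θ ^ 2 + Real.cos θ ^ 2) • w := by module
    _ = w := by rw [h, one_smul]

theorem ip_add {n : ℕ} (w v : E n) (s : ℝ) :
    ip n (w + s • v) (w + s • v) = ip n w w + s * (2 * ip n w v) + s ^ 2 * ip n v v := by
  simp only [ip, Prod.fst_add, Prod.snd_add, Prod.smul_fst, Prod.smul_snd, Pi.add_apply,
    Pi.smul_apply, smul_eq_mul, mul_add, Finset.mul_sum]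
  simp only [← Finset.sum_add_distrib]
  exact Finset.sum_congr rfl fun i _ => by ring

theorem contDiff_ip {n : ℕ} : ContDiff ℝ (⊤ : ℕ∞) (fun w : E n => ip n w w) := by
  unfold ip
  fun_prop

theorem hasFDerivAt_ip {n : ℕ} (w : E n) :
    ∃ L : E n →L[ℝ] ℝ, HasFDerivAt (fun w : E n => ip n w w) L w ∧ ∀ v, L v = 2 * ip n w v := by
  have hd := (contDiff_ip (n := n)).differentiable (by simp) w
  refine ⟨_, hd.hasFDerivAt, fun v => ?_⟩
  rw [← hd.lineDeriv_eq_fderiv, lineDeriv]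
  simp only [ip_add]
  have h1 : HasDerivAt (fun s : ℝ => ip n w w + s * (2 * ip n w v) + s ^ 2 * ip n v v)
      (1 * (2 * ip n w v) + ((2 : ℕ) * (0 : ℝ) ^ (2 - 1)) * ip n v v) 0 :=
    (((hasDerivAt_id (0 : ℝ)).mul_const _).const_add _).add ((hasDerivAt_pow 2 0).mul_const _)
  rw [h1.deriv]
  simp

theorem norm_le_of_ip_le {n : ℕ} {w : E n} {δ : ℝ} (hδ : 0 ≤ δ) (h : ip n w w ≤ δ ^ 2) :
    ‖w‖ ≤ δ := by
  have h1 : ∀ i, w.1 i * w.1 i ≤ ∑ i, w.1 i * w.1 i := fun i =>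
    Finset.single_le_sum (f := fun i => w.1 i * w.1 i) (fun i _ => mul_self_nonneg _)
      (Finset.mem_univ i)
  have h2 : ∀ i, w.2 i * w.2 i ≤ ∑ i, w.2 i * w.2 i := fun i =>
    Finset.single_le_sum (f := fun i => w.2 i * w.2 i) (fun i _ => mul_self_nonneg _)
      (Finset.mem_univ i)
  have p1 : 0 ≤ ∑ i, w.1 i * w.1 i := Finset.sum_nonneg fun i _ => mul_self_nonneg _
  have p2 : 0 ≤ ∑ i, w.2 i * w.2 i := Finset.sum_nonneg fun i _ => mul_self_nonneg _
  unfold ip at h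
  rw [norm_prod_le_iff, pi_norm_le_iff_of_nonneg hδ, pi_norm_le_iff_of_nonneg hδ]
  refine ⟨fun i => ?_, fun i => ?_⟩
  · exact abs_le_of_sq_le_sq (by nlinarith [h1 i]) hδ
  · exact abs_le_of_sq_le_sq (by nlinarith [h2 i]) hδ

/-- The twist about `o`: rotation of `z − o` by the angle `g(|z−o|²)`. -/
def twist (n : ℕ) (g : ℝ → ℝ) (o : E n) : E n ≃ E n where
  toFun z := o + rot n (g (ip n (z - o) (z - o))) (z - o)
  invFun z := o + rot n (-g (ip n (z - o) (z - o))) (z - o)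
  left_inv z := by simp [ip_rot, rot_neg_rot]
  right_inv z := by
    have := rot_neg_rot (-g (ip n (z - o) (z - o))) (z - o)
    rw [neg_neg] at this
    simp [ip_rot, this]

theorem twist_apply {n : ℕ} (g : ℝ → ℝ) (o z : E n) :
    twist n g o z = o + rot n (g (ip n (z - o) (z - o))) (z - o) := rfl

theorem contDiff_twist {n : ℕ} {g : ℝ → ℝ} (hg : ContDiff ℝ (⊤ : ℕ∞) g) (o : E n) :
    ContDiff ℝ (⊤ : ℕ∞) fun z => o + rot n (g (ip n (z - o) (z - o))) (z - o) := by
  have h1 : ContDiff ℝ (⊤ : ℕ∞) (fun z : E n => z - o) := contDiff_id.sub contDiff_const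
  have h2 : ContDiff ℝ (⊤ : ℕ∞) (fun z : E n => g (ip n (z - o) (z - o))) :=
    hg.comp (contDiff_ip.comp h1)
  exact contDiff_const.add (((Real.contDiff_cos.comp h2).smul h1).add
    ((Real.contDiff_sin.comp h2).smul ((Jop n).contDiff.comp h1)))

theorem isSympl_twist {n : ℕ} {g : ℝ → ℝ} (hg : ContDiff ℝ (⊤ : ℕ∞) g) (o : E n) :
    IsSympl n (twist n g o) := by
  refine ⟨contDiff_twist hg o, contDiff_twist hg.neg o, fun z u v => ?_⟩
  obtain ⟨L, hL, hLv⟩ := hasFDerivAt_ip (z - o)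
  set q := ip n (z - o) (z - o) with hq
  have h1 : HasFDerivAt (fun z : E n => z - o) (ContinuousLinearMap.id ℝ _) z :=
    (hasFDerivAt_id z).sub_const o
  have h2 : HasFDerivAt (fun z : E n => g (ip n (z - o) (z - o))) (deriv g q • L) z := by
    have a := (hg.differentiable (by simp) q).hasDerivAt.comp_hasFDerivAt z (hL.comp z h1)
    rw [ContinuousLinearMap.comp_id] at a
    exact a
  have h3 := (((h2.cos).smul h1).add ((h2.sin).smul ((Jop n).hasFDerivAt.comp z h1))).const_add o
  have h4 : ∀ u, fderiv ℝ (twist n g o) z u =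
      rot n (g q) (u + (deriv g q * (2 * ip n (z - o) u)) • Jop n (z - o)) := by
    intro u
    have h5 : fderiv ℝ (twist n g o) z = _ := h3.fderiv
    rw [h5, ← hLv]
    simp only [rot, map_add, map_smul, Jop_Jop, ← hq]
    simp
    module
  rw [h4, h4, omega0_rot]
  simp only [omega0_add_left, omega0_add_right, omega0_smul_left, omega0_smul_right]
  rw [omega0_J_J, omega0_self, omega0_J_left, omega0_J_right, ip_comm u (z - o)]
  ring

/-- The twist by the angle `2 h'(|z−o|²)` is the time-one map of `(t,z) ↦ c'(t) h(|z−o|²)`, where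
`c` is a smooth step from `0` to `1`. -/
theorem cheap_twist {n : ℕ} {h : ℝ → ℝ} (hh : ContDiff ℝ (⊤ : ℕ∞) h) (o : E n) {δ : ℝ}
    (hδ : 0 ≤ δ) (hsupp : ∀ s, h s ≠ 0 → s ≤ δ ^ 2) :
    ∃ c, Cheap n (twist n (fun s => 2 * deriv h s) o) c := by
  set c := Real.smoothTransition with hc
  have hcs : ContDiff ℝ (⊤ : ℕ∞) c := Real.smoothTransition.contDiff
  have hc' : ContDiff ℝ (⊤ : ℕ∞) (deriv c) := by
    have : ContDiff ℝ ((⊤ : ℕ∞) + 1) c := hcs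
    exact ((contDiff_succ_iff_deriv).1 this).2.2
  have hc0 : ∀ t, deriv c t ≠ 0 → t ∈ Icc (0 : ℝ) 1 := by
    intro t ht
    by_contra hcon
    apply ht
    rw [mem_Icc, not_and_or, not_le, not_le] at hcon
    rcases hcon with h0 | h1
    · have : c =ᶠ[𝓝 t] fun _ => 0 := by
        filter_upwards [Iio_mem_nhds h0] with s hs
        exact Real.smoothTransition.zero_of_nonpos (le_of_lt hs)
      simp [this.deriv_eq]
    · have : c =ᶠ[𝓝 t] fun _ => 1 := by
        filter_upwards [Ioi_mem_nhds h1] with s hs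
        exact Real.smoothTransition.one_of_one_le (le_of_lt hs)
      simp [this.deriv_eq]
  set H : ℝ × E n → ℝ := fun p => deriv c p.1 * h (ip n (p.2 - o) (p.2 - o)) with hH
  have hsub : tsupport H ⊆ Icc (0 : ℝ) 1 ×ˢ closedBall o δ := by
    refine closure_minimal (fun p hp => ?_) (isClosed_Icc.prod isClosed_closedBall)
    have := mul_ne_zero_iff.1 hp
    refine ⟨hc0 _ this.1, ?_⟩
    rw [mem_closedBall, dist_eq_norm]
    exact norm_le_of_ip_le hδ (hsupp _ this.2)
  refine mem_HamGrp_iff.1 ⟨H, fun t z => o +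
    rot n (c t * (2 * deriv h (ip n (z - o) (z - o)))) (z - o), ⟨?_, ?_, ?_⟩,
    ⟨fun z => ?_, fun z t => ?_⟩, ?_⟩
  · exact (hc'.comp contDiff_fst).mul (hh.comp (contDiff_ip.comp (contDiff_snd.sub contDiff_const)))
  · exact (isCompact_Icc.prod (isCompact_closedBall o δ)).of_isClosed_subset
      (isClosed_tsupport H) hsub
  · exact fun p hp => ⟨(hsub hp).1, trivial⟩
  · simp [rot, hc]
  · set w := z - o with hw
    set A := 2 * deriv h (ip n w w) with hA
    have hX : XH n H t (o + rot n (c t * A) w) = (deriv c t * A) • Jop n (rot n (c t * A) w) := by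
      refine omega0_nondeg fun v => ?_
      rw [omega0_XH, omega0_smul_left, omega0_J_left]
      obtain ⟨L, hL, hLv⟩ := hasFDerivAt_ip (o + rot n (c t * A) w - o)
      have h1 : HasFDerivAt (fun z : E n => z - o) (ContinuousLinearMap.id ℝ _)
        (o + rot n (c t * A) w) := (hasFDerivAt_id _).sub_const o
      have h2 := (hh.differentiable (by simp)
        (ip n (o + rot n (c t * A) w - o) (o + rot n (c t * A) w - o))).hasDerivAt.comp_hasFDerivAt
          (o + rot n (c t * A) w) (hL.comp (o + rot n (c t * A) w) h1)
      have h3 : fderiv ℝ (fun z => H (t, z)) (o + rot n (c t * A) w) = _ :=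
        (h2.const_mul (deriv c t)).fderiv
      rw [h3]
      simp only [ContinuousLinearMap.comp_id, smul_apply, hLv, smul_eq_mul,
        add_sub_cancel_left, ip_rot, hA]
      ring
    rw [hX]
    have hct : HasDerivAt (fun t => c t * A) (deriv c t * A) t :=
      (hcs.differentiable (by simp) t).hasDerivAt.mul_const A
    have h4 := (((hct.cos).smul_const w).add ((hct.sin).smul_const (Jop n w))).const_add o
    have h5 : (deriv c t * A) • Jop n (rot n (c t * A) w) =
        (-Real.sin (c t * A) * (deriv c t * A)) • w +
        (Real.cos (c t * A) * (deriv c t * A)) • Jop n w := by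
      simp only [rot, map_add, map_smul, Jop_Jop]
      module
    rw [h5]
    exact h4
  · ext1 z
    simp [twist_apply, hc]

/-- Points near `p` are images of `p` under Hamiltonian diffeomorphisms supported near `p`:
a half turn about the midpoint of `p` and `p'` exchanges them. -/
theorem exists_local_move {n : ℕ} {U : Set (E n)} (hU : IsOpen U) {p : E n} (hp : p ∈ U) :
    ∀ᶠ p' in 𝓝 p, ∃ f : E n ≃ E n, IsSympl n f ∧ (∃ c, Cheap n f c) ∧ f p = p' ∧
      ∀ z, z ∉ U → f z = z := by
  obtain ⟨R, hR, hball⟩ := Metric.isOpen_iff.1 hU p hp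
  set δ := R / 4 with hδ
  have hδ0 : 0 < δ := by positivity
  have e1 : ∀ᶠ p' in 𝓝 p, ip n (p - (2⁻¹ : ℝ) • (p + p')) (p - (2⁻¹ : ℝ) • (p + p')) < δ ^ 2 := by
    have hc : Continuous fun p' : E n =>
        ip n (p - (2⁻¹ : ℝ) • (p + p')) (p - (2⁻¹ : ℝ) • (p + p')) :=
      (contDiff_ip (n := n)).continuous.comp (by fun_prop : Continuous fun p' : E n =>
        p - (2⁻¹ : ℝ) • (p + p'))
    refine hc.continuousAt.eventually_lt continuousAt_const ?_
    have : p - (2⁻¹ : ℝ) • (p + p) = 0 := by module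
    rw [this]
    simpa [ip] using by positivity
  have e2 : ∀ᶠ p' in 𝓝 p, dist ((2⁻¹ : ℝ) • (p + p')) p < δ := by
    have hc : Continuous fun p' : E n => dist ((2⁻¹ : ℝ) • (p + p')) p := by fun_prop
    refine hc.continuousAt.eventually_lt continuousAt_const ?_
    have : (2⁻¹ : ℝ) • (p + p) = p := by module
    rw [this]
    simpa using hδ0
  filter_upwards [e1, e2] with p' h1 h2
  set o := (2⁻¹ : ℝ) • (p + p') with ho
  set q := ip n (p - o) (p - o) with hq
  have hq0 : 0 ≤ q := by
    simp only [hq, ip]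
    exact add_nonneg (Finset.sum_nonneg fun i _ => mul_self_nonneg _)
      (Finset.sum_nonneg fun i _ => mul_self_nonneg _)
  let χ : ContDiffBump (0 : ℝ) := ⟨(q + δ ^ 2) / 2, δ ^ 2, by positivity, by linarith⟩
  set h : ℝ → ℝ := fun s => Real.pi / 2 * (s - q) * χ s with hh
  have hs : ContDiff ℝ (⊤ : ℕ∞) h :=
    (contDiff_const.mul (contDiff_id.sub contDiff_const)).mul χ.contDiff
  have hs' : ContDiff ℝ (⊤ : ℕ∞) (deriv h) := by
    have : ContDiff ℝ ((⊤ : ℕ∞) + 1) h := hs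
    exact ((contDiff_succ_iff_deriv).1 this).2.2
  have hzero : ∀ s, δ ^ 2 < s → h =ᶠ[𝓝 s] fun _ => 0 := fun s hs => by
    filter_upwards [Ioi_mem_nhds hs] with x hx
    have : χ x = 0 := χ.zero_of_le_dist (by
      rw [Real.dist_eq, sub_zero]
      exact (le_of_lt hx).trans (le_abs_self x))
    simp [hh, this]
  refine ⟨twist n (fun s => 2 * deriv h s) o, isSympl_twist (contDiff_const.mul hs') o,
    cheap_twist hs o hδ0.le fun s hs => ?_, ?_, fun z hz => ?_⟩
  · by_contra hcon
    exact hs (hzero s (not_le.1 hcon)).self_of_nhds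
  · have hχ : χ q = 1 := χ.one_of_mem_closedBall (by
      rw [mem_closedBall, Real.dist_eq, sub_zero, abs_of_nonneg hq0]
      change q ≤ (q + δ ^ 2) / 2
      linarith)
    have hd : HasDerivAt h _ q := (((hasDerivAt_id q).sub_const q).const_mul (Real.pi / 2)).mul
      (χ.contDiff (n := 1).differentiable (by simp) q).hasDerivAt
    have hd' : 2 * deriv h q = Real.pi := by
      rw [hd.deriv]
      simp [hχ]
      ring
    rw [twist_apply, ← hq, hd', rot, Real.cos_pi, Real.sin_pi, ho]
    module
  · have hlt : δ ^ 2 < ip n (z - o) (z - o) := by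
      by_contra hcon
      have hn := norm_le_of_ip_le hδ0.le (not_lt.1 hcon)
      apply hz
      apply hball
      rw [mem_ball]
      have := dist_triangle z o p
      rw [← dist_eq_norm] at hn
      linarith
    have : deriv h (ip n (z - o) (z - o)) = 0 := by simp [(hzero _ hlt).deriv_eq]
    rw [twist_apply, this]
    simp [rot]

/-! ### Displacement with arbitrarily small energy -/

/-- `V` can be displaced from `N` by Hamiltonian diffeomorphisms of arbitrarily small Hofer norm. -/
def ZeroDisp (n : ℕ) (V N : Set (E n)) : Prop :=
  ∀ ε : ℝ, 0 < ε → ∃ φ : E n ≃ E n, Cheap n φ ε ∧ ∀ z ∈ V, φ z ∉ N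

theorem mem_rigidLocus {n : ℕ} {N : Set (E n)} {p : E n} :
    p ∈ rigidLocus n N ↔ ∀ φ ∈ SigmaBar n N, φ p ∈ N := by
  simp [rigidLocus]

/-- A compact ball about a non-rigid point has zero displacement energy: if `φ ∈ Σ̄_N` moves `p`
off `N` and `σ ∈ Σ_N` is Hofer-close to `φ`, then `σ⁻¹φ` is small and moves a fixed ball off `N`. -/
theorem exists_zeroDisp_of_notMem {n : ℕ} (hn : 1 ≤ n) {N : Set (E n)} (hN : IsClosed N) {p : E n}
    (hp : p ∉ rigidLocus n N) : ∃ r > 0, ZeroDisp n (closedBall p r) N := by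
  rw [mem_rigidLocus] at hp
  push Not at hp
  obtain ⟨φ, ⟨hφ, hcl⟩, hφp⟩ := hp
  obtain ⟨c, hc⟩ := mem_HamGrp_iff.1 hφ
  obtain ⟨r, hr, hball⟩ := Metric.nhds_basis_closedBall.mem_iff.1
    (hc.continuous.continuousAt.preimage_mem_nhds (hN.isOpen_compl.mem_nhds hφp))
  refine ⟨r, hr, fun ε hε => ?_⟩
  obtain ⟨σ, ⟨hσ, hσN⟩, χ, hl, hr', hlt⟩ := hcl ε hε
  obtain ⟨d, hd⟩ := mem_HamGrp_iff.1 hσ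
  have hχ : Cheap n χ d := Cheap.symm (e := ⟨σ, χ, hl, hr'⟩) hd
  have hcomp : Cheap n (χ ∘ φ) ε :=
    Cheap.of_hoferNorm_lt (mem_HamGrp_iff.2 ⟨_, hχ.comp hn hc⟩) hlt
  obtain ⟨e, he⟩ := hcomp.exists_equiv
  refine ⟨e, he ▸ hcomp, fun z hz hmem => ?_⟩
  rw [he] at hmem
  have : σ (χ (φ z)) ∈ N := hσN ▸ mem_image_of_mem σ hmem
  rw [hr'] at this
  exact hball hz this

/-- Zero displacement energy of a compact set from a closed set passes through `C⁰`-limits of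
symplectomorphisms: the conjugates `Ψ_m φ Ψ_m⁻¹` have the energy of `φ` and converge locally
uniformly to `ψ φ ψ⁻¹`. -/
theorem ZeroDisp.image {n : ℕ} {K N : Set (E n)} (hK : IsCompact K) (hN : IsClosed N)
    (h : ZeroDisp n K N) {ψ : E n ≃ₜ E n} {Ψ : ℕ → E n ≃ E n} (hΨ : ∀ m, IsSympl n (Ψ m))
    (h1 : TendstoLocallyUniformly (fun m z => Ψ m z) (fun z => ψ z) atTop)
    (h2 : TendstoLocallyUniformly (fun m z => (Ψ m).symm z) (fun z => ψ.symm z) atTop) :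
    ZeroDisp n (ψ '' K) (ψ '' N) := by
  intro ε hε
  obtain ⟨φ, hφ, hdisp⟩ := h ε hε
  have key : ∀ᶠ m in atTop, ∀ z ∈ ψ '' K, Ψ m (φ ((Ψ m).symm z)) ∉ ψ '' N := by
    suffices hP : ∀ z ∈ ψ '' K, ∀ᶠ q : ℕ × E n in atTop ×ˢ 𝓝 z,
        Ψ q.1 (φ ((Ψ q.1).symm q.2)) ∉ ψ '' N by
      simp only [← eventually_iSup, ← (hK.image ψ.continuous).prod_nhdsSet_eq_biSup] at hP
      exact hP.curry.mono fun _ h => h.self_of_nhdsSet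
    intro z hz
    have hz' : ψ (φ (ψ.symm z)) ∉ ψ '' N := by
      obtain ⟨x, hx, rfl⟩ := hz
      rw [ψ.symm_apply_apply]
      rintro ⟨y, hy, hyx⟩
      exact hdisp x hx (ψ.injective hyx ▸ hy)
    have h1' : TendstoLocallyUniformly (fun (q : ℕ × E n) x => Ψ q.1 x) ψ (atTop ×ˢ 𝓝 z) :=
      fun u hu x => (h1 u hu x).imp fun t ht => ⟨ht.1, tendsto_fst.eventually ht.2⟩
    have h2' : TendstoLocallyUniformly (fun (q : ℕ × E n) x => (Ψ q.1).symm x) ψ.symm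
        (atTop ×ˢ 𝓝 z) :=
      fun u hu x => (h2 u hu x).imp fun t ht => ⟨ht.1, tendsto_fst.eventually ht.2⟩
    have t2 : Tendsto (fun q : ℕ × E n => (Ψ q.1).symm q.2) (atTop ×ˢ 𝓝 z) (𝓝 (ψ.symm z)) :=
      h2'.tendsto_comp ψ.symm.continuous.continuousAt tendsto_snd
    have t1 : Tendsto (fun q : ℕ × E n => Ψ q.1 (φ ((Ψ q.1).symm q.2))) (atTop ×ˢ 𝓝 z)
        (𝓝 (ψ (φ (ψ.symm z)))) :=
      h1'.tendsto_comp ψ.continuous.continuousAt ((hφ.continuous.tendsto _).comp t2)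
    exact t1.eventually ((ψ.isClosedMap N hN).isOpen_compl.mem_nhds hz')
  obtain ⟨m, hm⟩ := key.exists
  exact ⟨((Ψ m).symm.trans φ).trans (Ψ m), hφ.conj (hΨ m), hm⟩

/-- Hamiltonian diffeomorphisms supported in a set of zero displacement energy lie in `Σ̄_N`. -/
theorem ZeroDisp.mem_sigmaBar {n : ℕ} (hn : 1 ≤ n) {V N : Set (E n)} (h : ZeroDisp n V N)
    {f : E n ≃ E n} (hf : IsSympl n f) {c : ℝ} (hc : Cheap n f c) (hfV : ∀ z, z ∉ V → f z = z) :
    ⇑f ∈ SigmaBar n N := by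
  refine ⟨mem_HamGrp_iff.2 ⟨c, hc⟩, fun ε hε => ?_⟩
  obtain ⟨φ, hφ, hdisp⟩ := h (ε / 2) (half_pos hε)
  -- `σ = φ f φ⁻¹` is supported in `φ(V)`, which misses `N`
  set σ : E n ≃ E n := (φ.symm.trans f).trans φ with hσ
  have hσN : ∀ z ∈ N, σ z = z := fun z hz => by
    have : f (φ.symm z) = φ.symm z := hfV _ fun hmem => hdisp _ hmem (by simpa using hz)
    simp [hσ, this]
  refine ⟨σ, ⟨mem_HamGrp_iff.2 ⟨_, hφ.comp hn (hc.comp hn hφ.symm)⟩, ?_⟩, σ.symm,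
    σ.left_inv, σ.right_inv, ?_⟩
  · ext z
    constructor
    · rintro ⟨x, hx, rfl⟩
      rwa [hσN x hx]
    · exact fun hz => ⟨z, hz, hσN z hz⟩
  · -- `σ⁻¹ f = φ ∘ (f⁻¹ φ⁻¹ f)`
    have := (hφ.comp hn (hφ.symm.conj hf.symm)).hoferNorm_lt hn
    rw [add_halves] at this
    exact this

/-- The commutator trick: if `W` has zero displacement energy from itself, then commutators of
Hamiltonian diffeomorphisms supported in `W` have Hofer norm zero. -/
theorem ZeroDisp.cheap_commutator {n : ℕ} (hn : 1 ≤ n) {W : Set (E n)} (h : ZeroDisp n W W)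
    {f g : E n ≃ E n} (hf : IsSympl n f) (hg : IsSympl n g) (hfW : ∀ z, z ∉ W → f z = z)
    (hgW : ∀ z, z ∉ W → g z = z) {ε : ℝ} (hε : 0 < ε) :
    Cheap n (fun z => f (g (f.symm (g.symm z)))) ε := by
  obtain ⟨φ, hφ, hdisp⟩ := h (ε / 4) (by positivity)
  have hfs : ∀ z, z ∉ W → f.symm z = z := fun z hz => by
    rw [Equiv.symm_apply_eq, hfW z hz]
  have hfs' : ∀ z, z ∈ W → f.symm z ∈ W := fun z hz => by
    by_contra hcon
    have := hfW _ hcon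
    rw [Equiv.apply_symm_apply] at this
    exact hcon (this ▸ hz)
  have hg' : ∀ z, z ∈ W → g z ∈ W := fun z hz => by
    by_contra hcon
    exact hcon ((g.injective (hgW _ hcon)).symm ▸ hz)
  -- `b = φ f⁻¹ φ⁻¹` is supported in `φ(W)`, which is disjoint from the support of `g`
  set b : E n ≃ E n := (φ.symm.trans f.symm).trans φ with hb
  have hbW : ∀ z, z ∈ W → b z = z := fun z hz => by
    have : f.symm (φ.symm z) = φ.symm z := hfs _ fun hmem => hdisp _ hmem (by simpa using hz)
    simp [hb, this]
  have hbW' : ∀ z, z ∉ W → b z ∉ W := fun z hz hmem => by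
    have := hbW _ hmem
    exact hz (b.injective this ▸ hmem)
  have hcomm : ∀ z, b (g z) = g (b z) := fun z => by
    by_cases hz : z ∈ W
    · rw [hbW z hz, hbW _ (hg' z hz)]
    · rw [hgW z hz, hgW _ (hbW' z hz)]
  have hcomm' : ∀ z, b (g (b.symm z)) = g z := fun z => by
    rw [hcomm, Equiv.apply_symm_apply]
  set a : E n ≃ E n := b.trans f with ha
  have ha1 : Cheap n a (ε / 4 + ε / 4) := (hφ.conj hf).comp hn hφ.symm
  have h2 := ha1.comp hn (ha1.symm.conj hg)
  have e1 : (ε / 4 + ε / 4) + (ε / 4 + ε / 4) = ε := by ring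
  rw [e1] at h2
  convert h2 using 1
  ext1 z
  simp [ha, hcomm']

/-- Points with a neighbourhood of zero displacement energy are not rigid. -/
theorem notMem_of_zeroDisp {n : ℕ} (hn : 1 ≤ n) {V N : Set (E n)} (h : ZeroDisp n V N)
    (hV : IsOpen V) {p : E n} (hp : p ∈ V) : p ∉ rigidLocus n N := by
  intro hrig
  rw [mem_rigidLocus] at hrig
  have : Nonempty (Fin n) := ⟨⟨0, hn⟩⟩
  -- all points near `p` are images of `p` under elements of `Σ̄_N`
  have hnear : ∀ᶠ p' in 𝓝 p, p' ∈ N := by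
    filter_upwards [exists_local_move hV hp] with p' ⟨f, hf, ⟨c, hc⟩, hfp, hfV⟩
    exact hfp ▸ hrig f (h.mem_sigmaBar hn hf hc hfV)
  obtain ⟨W, hWsub, hW, hpW⟩ := _root_.mem_nhds_iff.1 (hnear.and (hV.mem_nhds hp))
  have hWW : ZeroDisp n W W := fun ε hε => by
    obtain ⟨φ, hφ, hd⟩ := h ε hε
    exact ⟨φ, hφ, fun z hz hmem => hd z (hWsub hz).2 (hWsub hmem).1⟩
  obtain ⟨φ, -, hd⟩ := h 1 one_pos
  have hφp : φ p ∉ N := hd p hp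
  have hne : p ≠ φ p := fun heq => hφp (heq ▸ hnear.self_of_nhds)
  obtain ⟨p', ⟨⟨f, hf, -, hfp, hfW⟩, hp'W⟩, hp'⟩ :=
    ((((exists_local_move hW hpW).and (hW.mem_nhds hpW)).filter_mono
      (nhdsWithin_le_nhds (s := {p}ᶜ))).and self_mem_nhdsWithin).exists
  obtain ⟨p'', ⟨g, hg, -, hgp, hgW⟩, hp''⟩ :=
    (((exists_local_move (hW.sdiff isClosed_singleton)
      (show p' ∈ W \ {p} from ⟨hp'W, hp'⟩)).filter_mono
      (nhdsWithin_le_nhds (s := {p'}ᶜ))).and self_mem_nhdsWithin).exists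
  have hgp0 : g p = p := hgW p fun hmem => hmem.2 rfl
  -- the commutator of `f` and `g` sends `p''` to `p'`
  obtain ⟨s, hs, hs1, hs2⟩ := exists_isSympl_map_pair hp'' hne
  set k : E n → E n := fun z => f (g (f.symm (g.symm z))) with hk
  have hkp : k p'' = p' := by
    simp only [hk, ← hgp, Equiv.symm_apply_apply]
    rw [show f.symm p' = p by rw [Equiv.symm_apply_eq, hfp], hgp0, hfp]
  have hcheap : ∀ ε, 0 < ε → Cheap n (s ∘ k ∘ s.symm) ε := fun ε hε =>
    (hWW.cheap_commutator hn hf hg hfW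
      (fun z hz => hgW z fun hmem => hz hmem.1) hε).conj hs
  have hmem : s ∘ k ∘ s.symm ∈ SigmaBar n N := by
    refine ⟨mem_HamGrp_iff.2 ⟨1, hcheap 1 one_pos⟩, fun ε hε => ⟨fun z => z,
      ⟨mem_HamGrp_iff.2 ⟨1, Cheap.id one_pos⟩, by simp⟩, fun z => z, fun _ => rfl, fun _ => rfl, ?_⟩⟩
    exact (hcheap ε hε).hoferNorm_lt hn
  have := hrig _ hmem
  simp only [Function.comp_apply, ← hs1, Equiv.symm_apply_apply, hkp, hs2] at this
  rw [hs1] at this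
  exact hφp this

theorem notMem_rigidLocus_image {n : ℕ} (hn : 1 ≤ n) {N : Set (E n)} (hN : IsClosed N)
    {ψ : E n ≃ₜ E n} {Ψ : ℕ → E n ≃ E n} (hΨ : ∀ m, IsSympl n (Ψ m))
    (h1 : TendstoLocallyUniformly (fun m z => Ψ m z) (fun z => ψ z) atTop)
    (h2 : TendstoLocallyUniformly (fun m z => (Ψ m).symm z) (fun z => ψ.symm z) atTop)
    {p : E n} (hp : p ∉ rigidLocus n N) : ψ p ∉ rigidLocus n (ψ '' N) := by
  obtain ⟨r, hr, hdisp⟩ := exists_zeroDisp_of_notMem hn hN hp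
  have hK := hdisp.image (isCompact_closedBall p r) hN hΨ h1 h2
  refine notMem_of_zeroDisp (V := ψ '' ball p r) hn (fun ε hε => ?_)
    (ψ.isOpenMap _ isOpen_ball) (mem_image_of_mem ψ (mem_ball_self hr))
  obtain ⟨φ, hφ, hd⟩ := hK ε hε
  exact ⟨φ, hφ, fun z hz => hd z (image_mono ball_subset_closedBall hz)⟩

/-- invariance of the rigid locus under symplectic homeomorphisms. -/
theorem rigidLocus_invariant_under_symplectic_homeo
    (n : ℕ) (hn : 1 ≤ n) (ψ : E n ≃ₜ E n) (hψ : IsSympHomeo n ψ)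
    (N : Set (E n)) (hN : IsClosed N) :
    rigidLocus n (⇑ψ '' N) = ⇑ψ '' rigidLocus n N := by
  obtain ⟨Ψ, hΨ, h1, h2⟩ := hψ
  have hΨ' : ∀ m, IsSympl n (Ψ m) := fun m => (hΨ m).isSympl
  ext z
  obtain ⟨p, rfl⟩ := ψ.surjective z
  rw [ψ.injective.mem_set_image]
  constructor
  · intro h
    by_contra hp
    exact notMem_rigidLocus_image hn hN hΨ' h1 h2 hp h
  · intro h
    by_contra hp
    have := notMem_rigidLocus_image (ψ := ψ.symm) (Ψ := fun m => (Ψ m).symm) hn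
      (ψ.isClosedMap N hN) (fun m => (hΨ' m).symm) h2 h1 hp
    rw [ψ.symm_apply_apply, ← image_comp, ψ.symm_comp_self, image_id] at this
    exact this h
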